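/- Suppose n ≡ 3 (mod 4). If φ is an {(n−1)/2, (n+1)/2, n}-isometry of C_n fixing 0̄ that is not an even isometry, then there exist i, j ∈ {1,...,n} and a σ_{i,j}-mapping τ such that φ coincides with τ on E and with T_{1̄^j} ∘ τ on O, where 1̄^j denotes the word with 1 in every position except a 0 in position j. Conversely, for every σ_{i,j}-mapping τ, the map equal to τ on E and to T_{1̄^j} ∘ τ on O is an {(n−1)/2, (n+1)/2, n}-isometry of C_n fixing 0̄. -/

import Mathlib

/-- The `σ_{i,j}`-mapping of the Boolean cube `C_n` associated with coordinates `i, j` and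
a bijection `σ : {1,…,n} \ {i} → {1,…,n} \ {j}`. -/
def sigmaMap (n : ℕ) (i j : Fin n)
    (σ : {k : Fin n // k ≠ i} ≃ {k : Fin n // k ≠ j}) :
    (Fin n → ZMod 2) → Fin n → ZMod 2 :=
  fun c k => if h : k = j then c i else c (σ.symm ⟨k, h⟩).1 + c i

/-!
Put `N = n + 1 = 2 * h`, so that `4 ∣ N`, and represent a word of length `n` by a word of length
`N` up to complement. Words at Hamming distance `d` are then at distance `min d (N - d)` in the
folded `N`-cube, on which the permutations of all `N` coordinates act.

The number of words at distance `h` from both ends of a pair at distance `2 * i` is half of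
`i.centralBinom * (h - i).centralBinom`, which decreases strictly while `2 * i ≤ h`. An injection
preserving the distance `h` preserves these numbers, hence the folded form of every even distance.
In particular it sends the two-element cuts `{none, a}`, which pairwise meet in one point, to
two-element cuts of the same kind; for `N > 4` these share a point, so on the even words the
injection is a permutation of the `N` coordinates. If it fixes the additional coordinate `none`,
it permutes the original coordinates and is an even isometry; otherwise it is a `σ_{i,j}`-mapping.
The odd words are the complements of the even ones, and preserving the distance `n` means
commuting with complementation.
-/

open Finset

namespace BooleanCube

section Counting

theorem rel_apply_iff_of_injective {X : Type*} [Finite X] {r : X → X → Prop} {f : X → X}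
    (hf : Function.Injective f) (hr : ∀ x y, r x y → r (f x) (f y)) (x y : X) :
    r (f x) (f y) ↔ r x y := by
  let R : Set (X × X) := {p | r p.1 p.2}
  have hR : Set.MapsTo (Prod.map f f) R R := fun p hp => hr p.1 p.2 hp
  have himage : Prod.map f f '' R = R :=
    Set.eq_of_subset_of_ncard_le hR.image_subset
      (Set.ncard_image_of_injective R (hf.prodMap hf)).ge
  refine ⟨fun h => ?_, hr x y⟩
  obtain ⟨p, hp, hpxy⟩ : (f x, f y) ∈ Prod.map f f '' R := himage.superset h
  obtain rfl : p = (x, y) := hf.prodMap hf hpxy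
  exact hp

theorem card_filter_card_inter_card_sdiff {ι : Type*} [Fintype ι] [DecidableEq ι]
    (U : Finset ι) (a b : ℕ) :
    #{S : Finset ι | #(S ∩ U) = a ∧ #(S \ U) = b} = (#U).choose a * (#Uᶜ).choose b := by
  rw [← card_powersetCard, ← card_powersetCard, ← card_product]
  refine card_nbij' (fun S => (S ∩ U, S \ U)) (fun p => p.1 ∪ p.2) ?_ ?_ ?_ ?_
  · intro S hS
    have hdisj : S \ U ⊆ Uᶜ := by grind [mem_compl]
    simpa [hdisj] using hS
  · rintro ⟨A, B⟩ h
    simp only [coe_product, Set.mem_prod, mem_coe, mem_powersetCard] at h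
    have hA : (A ∪ B) ∩ U = A := by grind [mem_compl]
    have hB : (A ∪ B) \ U = B := by grind [mem_compl]
    simp [hA, hB, h]
  · intro S _
    grind
  · rintro ⟨A, B⟩ h
    simp only [coe_product, Set.mem_prod, mem_coe, mem_powersetCard] at h
    ext k <;> grind [mem_compl]

theorem two_mul_choose_two_mul_sub_one {m : ℕ} (hm : 0 < m) :
    2 * (2 * m - 1).choose m = m.centralBinom := by
  obtain ⟨k, rfl⟩ := Nat.exists_eq_add_one.2 hm
  have hsymm : (2 * k + 1).choose (k + 1) = (2 * k + 1).choose k := Nat.choose_symm_half k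
  rw [Nat.centralBinom_eq_two_mul_choose, show 2 * (k + 1) = 2 * k + 1 + 1 by ring,
    Nat.choose_succ_succ', Nat.add_sub_cancel, ← hsymm, two_mul]

theorem centralBinom_mul_centralBinom_sub_lt {h i : ℕ} (hi : 2 * i + 1 < h) :
    (i + 1).centralBinom * (h - (i + 1)).centralBinom <
      i.centralBinom * (h - i).centralBinom := by
  obtain ⟨m, rfl⟩ : ∃ m, h = i + (m + 1) := ⟨h - i - 1, by omega⟩
  rw [show i + (m + 1) - (i + 1) = m by omega, show i + (m + 1) - i = m + 1 by omega]
  have hpos : 0 < i.centralBinom * m.centralBinom :=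
    Nat.mul_pos i.centralBinom_pos m.centralBinom_pos
  refine lt_of_mul_lt_mul_left (a := (i + 1) * (m + 1)) ?_ (Nat.zero_le _)
  calc (i + 1) * (m + 1) * ((i + 1).centralBinom * m.centralBinom)
      = (m + 1) * ((i + 1) * (i + 1).centralBinom) * m.centralBinom := by ring
    _ = 2 * ((m + 1) * (2 * i + 1)) * (i.centralBinom * m.centralBinom) := by
      rw [Nat.succ_mul_centralBinom_succ]; ring
    _ < 2 * ((i + 1) * (2 * m + 1)) * (i.centralBinom * m.centralBinom) := by
      exact Nat.mul_lt_mul_of_pos_right (by nlinarith) hpos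
    _ = (i + 1) * ((m + 1) * (m + 1).centralBinom) * i.centralBinom := by
      rw [Nat.succ_mul_centralBinom_succ]; ring
    _ = (i + 1) * (m + 1) * (i.centralBinom * (m + 1).centralBinom) := by ring

theorem strictAntiOn_centralBinom_mul_centralBinom_sub (h : ℕ) :
    StrictAntiOn (fun i => i.centralBinom * (h - i).centralBinom) {i | 2 * i ≤ h} := by
  refine strictAntiOn_of_succ_lt ⟨fun _ _ j hj i hi => ?_⟩ fun i _ _ hi => ?_
  · simp only [Set.mem_ofPred_eq, Set.mem_Icc] at *
    omega
  · simp only [Nat.succ_eq_succ, Set.mem_ofPred_eq] at hi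
    exact centralBinom_mul_centralBinom_sub_lt (by omega)

theorem min_sub_eq_of_centralBinom_mul_centralBinom_sub_eq {h i j : ℕ} (hi : i ≤ h) (hj : j ≤ h)
    (heq : i.centralBinom * (h - i).centralBinom = j.centralBinom * (h - j).centralBinom) :
    min i (h - i) = min j (h - j) := by
  have hmin (k : ℕ) (hk : k ≤ h) :
      (min k (h - k)).centralBinom * (h - min k (h - k)).centralBinom =
        k.centralBinom * (h - k).centralBinom := by
    rcases le_total k (h - k) with hle | hle
    · rw [min_eq_left hle]
    · rw [min_eq_right hle, Nat.sub_sub_self hk, mul_comm]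
  refine (strictAntiOn_centralBinom_mul_centralBinom_sub h).injOn ?_ ?_
    ((hmin i hi).trans (heq.trans (hmin j hj).symm)) <;>
  · simp only [Set.mem_ofPred_eq]
    omega

theorem exists_ne_eq_pair {V : Type*} [DecidableEq V] {A : Finset V} (hA : #A = 2) {t : V}
    (ht : t ∈ A) : ∃ x, x ≠ t ∧ A = {t, x} := by
  obtain ⟨x, hx, hxt⟩ := exists_mem_ne (hA ▸ one_lt_two) t
  refine ⟨x, hxt, (eq_of_subset_of_card_le (by grind) ?_).symm⟩
  rw [hA, card_pair hxt.symm]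

theorem exists_forall_mem_of_intersecting {V : Type*} [DecidableEq V] {𝒜 : Finset (Finset V)}
    (hsize : (𝒜 : Set (Finset V)).Sized 2) (hint : (𝒜 : Set (Finset V)).Intersecting)
    (hcard : 3 < #𝒜) : ∃ t, ∀ A ∈ 𝒜, t ∈ A := by
  have hmeet : ∀ A ∈ 𝒜, ∀ x y, {x, y} ∈ 𝒜 → x ∈ A ∨ y ∈ A := by
    intro A hA x y hxy
    have := hint hA hxy
    simp only [disjoint_insert_right, disjoint_singleton_right] at this
    tauto
  have hpair : ∀ A ∈ 𝒜, ∀ x ∈ A, ∀ y ∈ A, x ≠ y → A = {x, y} := by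
    intro A hA x hx y hy hxy
    exact (eq_of_subset_of_card_le (by grind) (by rw [hsize hA, card_pair hxy])).symm
  obtain ⟨A, hA, B, hB, hAB⟩ := one_lt_card.1 (show 1 < #𝒜 by omega)
  obtain ⟨t, htA, htB⟩ := not_disjoint_iff.1 (hint hA hB)
  obtain ⟨x, hxt, rfl⟩ := exists_ne_eq_pair (hsize hA) htA
  obtain ⟨y, hyt, rfl⟩ := exists_ne_eq_pair (hsize hB) htB
  have hxy : x ≠ y := by grind
  refine ⟨t, fun C hC => by_contra fun htC => ?_⟩
  obtain rfl : C = {x, y} := by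
    refine hpair C hC x ?_ y ?_ hxy
    · exact (hmeet C hC t x hA).resolve_left htC
    · exact (hmeet C hC t y hB).resolve_left htC
  have htriangle : 𝒜 ⊆ {{t, x}, {t, y}, {x, y}} := by
    intro D hD
    have hDA := hmeet D hD t x hA
    have hDB := hmeet D hD t y hB
    have hDC := hmeet D hD x y hC
    have := hpair D hD
    grind
  exact absurd ((card_le_card htriangle).trans card_le_three) (by omega)

theorem exists_perm_of_forall_card_inter_eq_one {ι : Type*} [Fintype ι] [DecidableEq ι]
    (hcard : 3 < Fintype.card ι) {A : ι → Finset (Option ι)} (hA : ∀ a, #(A a) = 2)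
    (hinter : ∀ a b, a ≠ b → #(A a ∩ A b) = 1) :
    ∃ π : Equiv.Perm (Option ι), ∀ a, A a = {π none, π (some a)} := by
  have hA_inj : Function.Injective A := by
    intro a b hab
    by_contra hne
    have := hinter a b hne
    rw [hab, inter_self, hA] at this
    omega
  have hsize : (↑(univ.image A) : Set (Finset (Option ι))).Sized 2 := by
    simpa [Set.Sized] using hA
  have hint : (↑(univ.image A) : Set (Finset (Option ι))).Intersecting := by
    simp only [coe_image, coe_univ, Set.image_univ]
    rintro _ ⟨a, rfl⟩ _ ⟨b, rfl⟩
    rw [disjoint_iff_inter_eq_empty, ← card_eq_zero]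
    rcases eq_or_ne a b with rfl | hab
    · rw [inter_self, hA]
      decide
    · rw [hinter a b hab]
      decide
  obtain ⟨t, ht⟩ := exists_forall_mem_of_intersecting hsize hint
    (by rwa [card_image_of_injective _ hA_inj])
  choose s hst hs using fun a =>
    exists_ne_eq_pair (hA a) (ht (A a) (mem_image_of_mem A (mem_univ a)))
  have hs_inj : Function.Injective fun o : Option ι => o.elim t s := by
    rintro (_ | a) (_ | b) hab
    · rfl
    · exact absurd hab.symm (hst b)
    · exact absurd hab (hst a)
    · exact congrArg some (hA_inj (by rw [hs, hs, show s a = s b from hab]))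
  exact ⟨.ofBijective _ (Finite.injective_iff_bijective.1 hs_inj), hs⟩

end Counting

section Hamming

variable {ι : Type*}

theorem add_one_add_one (x : ι → ZMod 2) : x + 1 + 1 = x := by
  have hadd (a : ZMod 2) : a + 1 + 1 = a := by decide +revert
  exact funext fun _ => hadd _

variable [Fintype ι]

theorem hammingDist_comp_equiv {κ α : Type*} [Fintype κ] [DecidableEq α] (e : κ ≃ ι)
    (x y : ι → α) : hammingDist (x ∘ e) (y ∘ e) = hammingDist x y :=
  card_equiv e (by simp)

theorem hammingDist_add_right {G : Type*} [AddGroup G] [DecidableEq G] (x y z : ι → G) :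
    hammingDist (x + z) (y + z) = hammingDist x y :=
  hammingDist_comp (fun k => (· + z k)) fun _ => add_left_injective _

theorem hammingDist_add_one_right (x y : ι → ZMod 2) :
    hammingDist x (y + 1) + hammingDist x y = Fintype.card ι := by
  have hne (k : ι) : x k ≠ y k + 1 ↔ ¬ x k ≠ y k := by
    generalize x k = a, y k = b
    decide +revert
  simp only [hammingDist, Pi.add_apply, Pi.one_apply, hne]
  rw [add_comm, card_filter_add_card_filter_not, card_univ]

theorem eq_add_one_of_hammingDist_eq_card {x y : ι → ZMod 2}
    (h : hammingDist x y = Fintype.card ι) : x = y + 1 := by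
  have := hammingDist_add_one_right x y
  exact hammingDist_eq_zero.1 (by omega)

theorem hammingDist_add_one_self (x : ι → ZMod 2) :
    hammingDist (x + 1) x = Fintype.card ι := by
  have := hammingDist_add_one_right (x + 1) x
  simpa using this

theorem even_hammingNorm_add_one (hn : Odd (Fintype.card ι)) {c : ι → ZMod 2} :
    Even (hammingNorm (c + 1)) ↔ Odd (hammingNorm c) := by
  have hcompl := hammingDist_add_one_right 0 c
  simp only [hammingDist_zero_left] at hcompl
  rw [← hcompl] at hn
  grind

theorem odd_hammingNorm_add_one (hn : Odd (Fintype.card ι)) {c : ι → ZMod 2} :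
    Odd (hammingNorm (c + 1)) ↔ Even (hammingNorm c) := by
  rw [← even_hammingNorm_add_one hn, add_one_add_one]

theorem natCast_hammingDist (x y : ι → ZMod 2) :
    (hammingDist x y : ZMod 2) = ∑ k, x k + ∑ k, y k := by
  have hite (a b : ZMod 2) : (if a ≠ b then 1 else 0) = a + b := by decide +revert
  simp only [hammingDist, card_filter, Nat.cast_sum, Nat.cast_ite, Nat.cast_one, Nat.cast_zero,
    hite, sum_add_distrib]

theorem even_hammingDist_iff {x y : ι → ZMod 2} :
    Even (hammingDist x y) ↔ ∑ k, x k = ∑ k, y k := by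
  rw [← ZMod.natCast_eq_zero_iff_even, natCast_hammingDist, CharTwo.add_eq_zero]

theorem even_hammingNorm_iff {x : ι → ZMod 2} : Even (hammingNorm x) ↔ ∑ k, x k = 0 := by
  rw [← hammingDist_zero_right, even_hammingDist_iff, Pi.zero_def, sum_const_zero]

/-- The characteristic word of a set of coordinates. -/
def charWord [DecidableEq ι] (A : Finset ι) : ι → ZMod 2 :=
  fun k => if k ∈ A then 1 else 0

theorem hammingNorm_charWord [DecidableEq ι] (A : Finset ι) : hammingNorm (charWord A) = #A := by
  simp [hammingNorm, charWord]

theorem charWord_filter_ne_zero [DecidableEq ι] (w : ι → ZMod 2) :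
    charWord ({k | w k ≠ 0} : Finset ι) = w := by
  have hite (a : ZMod 2) : (if a ≠ 0 then 1 else 0) = a := by decide +revert
  ext k
  simpa only [charWord, mem_filter_univ] using hite (w k)

theorem hammingDist_charWord_add_two_mul [DecidableEq ι] (w : ι → ZMod 2) (A : Finset ι) :
    hammingDist w (charWord A) + 2 * #{k ∈ A | w k ≠ 0} = hammingNorm w + #A := by
  have hfilter : A.filter (w · ≠ 0) = ({k | w k ≠ 0 ∧ charWord A k ≠ 0} : Finset ι) := by
    ext
    simp [charWord, and_comm]
  have hite (a b : ZMod 2) : (if a ≠ b then 1 else 0) + 2 * (if a ≠ 0 ∧ b ≠ 0 then 1 else 0) =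
      (if a ≠ 0 then 1 else 0) + (if b ≠ 0 then 1 else 0) := by decide +revert
  rw [← hammingNorm_charWord A, hfilter]
  simp only [hammingDist, hammingNorm, card_filter, mul_sum, ← sum_add_distrib, hite]

theorem card_filter_hammingDist_eq_and_hammingDist_eq [DecidableEq ι] {x y : ι → ZMod 2}
    {h i : ℕ} (hxy : hammingDist x y = 2 * i) (hi : i ≤ h) :
    #{z | hammingDist x z = h ∧ hammingDist y z = h} =
      (2 * i).choose i * (Fintype.card ι - 2 * i).choose (h - i) := by
  let U : Finset ι := {k | x k ≠ y k}
  let e : (ι → ZMod 2) ≃ Finset ι :=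
    { toFun z := {k | x k ≠ z k}
      invFun S k := x k + if k ∈ S then 1 else 0
      left_inv z := by
        have hite (a b : ZMod 2) : (a + if a ≠ b then 1 else 0) = b := by decide +revert
        ext k
        simpa only [mem_filter_univ] using hite _ _
      right_inv S := by simp }
  have hsymm (z : ι → ZMod 2) : ({k | y k ≠ z k} : Finset ι) = U \ e z ∪ e z \ U := by
    have hne (a b c : ZMod 2) : b ≠ c ↔ a ≠ b ∧ ¬ a ≠ c ∨ a ≠ c ∧ ¬ a ≠ b := by decide +revert
    ext k
    simp only [mem_union, mem_sdiff, mem_filter_univ, e, U, Equiv.coe_fn_mk]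
    exact hne _ _ _
  have hU : #U = 2 * i := hxy
  rw [← hU, ← card_compl, ← card_filter_card_inter_card_sdiff]
  refine card_equiv e fun z => ?_
  have hx : hammingDist x z = #(e z) := rfl
  have hy : hammingDist y z = #(U \ e z) + #(e z \ U) :=
    (congrArg card (hsymm z)).trans (card_union_of_disjoint disjoint_sdiff_sdiff)
  have hSU := card_inter_add_card_sdiff (e z) U
  have hUS := card_inter_add_card_sdiff U (e z)
  rw [inter_comm] at hUS
  simp only [mem_filter_univ]
  omega

end Hamming

section FoldedCube

variable {ι : Type*} [Fintype ι]

/-- The distance between two words of the Boolean cube in the folded cube of dimension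
`card ι + 1`, that is, in the graph obtained from the Boolean cube by joining each word to its
complement. -/
def foldedDist (x y : ι → ZMod 2) : ℕ :=
  min (hammingDist x y) (Fintype.card ι + 1 - hammingDist x y)

/-- A map of the Boolean cube preserving the folded distance of words at even Hamming distance. -/
def IsEvenFoldedIsometry (φ : (ι → ZMod 2) → ι → ZMod 2) : Prop :=
  ∀ x y, Even (hammingDist x y) → foldedDist (φ x) (φ y) = foldedDist x y

theorem foldedDist_add_right (x y z : ι → ZMod 2) :
    foldedDist (x + z) (y + z) = foldedDist x y := by
  rw [foldedDist, hammingDist_add_right, foldedDist]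

theorem even_foldedDist (hN : Even (Fintype.card ι + 1)) {x y : ι → ZMod 2} :
    Even (foldedDist x y) ↔ Even (hammingDist x y) := by
  have hle := hammingDist_le_card_fintype (x := x) (y := y)
  rcases min_choice (hammingDist x y) (Fintype.card ι + 1 - hammingDist x y) with h | h <;>
    grind [foldedDist]

theorem eq_of_foldedDist_eq_zero {x y : ι → ZMod 2} (h : foldedDist x y = 0) : x = y := by
  have hle := hammingDist_le_card_fintype (x := x) (y := y)
  exact hammingDist_eq_zero.1 (by grind [foldedDist])

theorem two_mul_card_filter_hammingDist_eq_and_hammingDist_eq [DecidableEq ι]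
    {x y : ι → ZMod 2} {h i : ℕ} (hN : Fintype.card ι + 1 = 2 * h)
    (hxy : hammingDist x y = 2 * i) :
    2 * #{z | hammingDist x z = h ∧ hammingDist y z = h} =
      i.centralBinom * (h - i).centralBinom := by
  have hle := hammingDist_le_card_fintype (x := x) (y := y)
  rw [card_filter_hammingDist_eq_and_hammingDist_eq hxy (by omega),
    ← two_mul_choose_two_mul_sub_one (m := h - i) (by omega), Nat.centralBinom,
    show 2 * (h - i) - 1 = Fintype.card ι - 2 * i by omega]
  ring

theorem isEvenFoldedIsometry_of_injective {h : ℕ} (hN : Fintype.card ι + 1 = 2 * h)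
    {φ : (ι → ZMod 2) → ι → ZMod 2} (hφ : Function.Injective φ)
    (hdist : ∀ x y, hammingDist x y = h → hammingDist (φ x) (φ y) = h) :
    IsEvenFoldedIsometry φ := by
  classical
  intro x y hxy
  obtain ⟨i, hi⟩ := even_iff_exists_two_mul.1 hxy
  have hcard : #{z | hammingDist (φ x) z = h ∧ hammingDist (φ y) z = h} =
      #{z | hammingDist x z = h ∧ hammingDist y z = h} := by
    refine (card_bijective φ (Finite.injective_iff_bijective.1 hφ) fun z => ?_).symm
    have hiff := rel_apply_iff_of_injective hφ hdist
    simp only [mem_filter_univ, hiff]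
  have hcount := two_mul_card_filter_hammingDist_eq_and_hammingDist_eq hN hi
  obtain ⟨z, hz⟩ : ∃ z, hammingDist (φ x) z = h ∧ hammingDist (φ y) z = h := by
    have hpos := Nat.mul_pos i.centralBinom_pos (h - i).centralBinom_pos
    rw [← hcount, ← hcard] at hpos
    simpa [Finset.Nonempty] using card_pos.1 (Nat.pos_of_mul_pos_left hpos)
  obtain ⟨j, hj⟩ : ∃ j, hammingDist (φ x) (φ y) = 2 * j := by
    have hsum : ∑ k, φ x k + ∑ k, z k = ∑ k, φ y k + ∑ k, z k := by
      rw [← natCast_hammingDist, ← natCast_hammingDist, hz.1, hz.2]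
    exact even_iff_exists_two_mul.1 (even_hammingDist_iff.2 (add_right_cancel hsum))
  have hle := hammingDist_le_card_fintype (x := x) (y := y)
  have hφ_le := hammingDist_le_card_fintype (x := φ x) (y := φ y)
  rw [← hcard, two_mul_card_filter_hammingDist_eq_and_hammingDist_eq hN hj] at hcount
  have hmin := min_sub_eq_of_centralBinom_mul_centralBinom_sub_eq (by omega) (by omega) hcount
  rw [foldedDist, foldedDist, hi, hj]
  omega

end FoldedCube

section Representatives

variable {ι : Type*}

/-- The word of length `card ι` represented by a word of length `card ι + 1`, read modulo
complement; the coordinate `none` is normalised to `0`. -/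
def foldWord (w : Option ι → ZMod 2) : ι → ZMod 2 :=
  fun k => w (some k) + w none

/-- The representative of a word vanishing at the additional coordinate `none`. -/
def liftWord (c : ι → ZMod 2) : Option ι → ZMod 2 :=
  fun o => o.elim 0 c

/-- The word representing the cut `{A, Aᶜ}` of the coordinate set of the folded cube. -/
def cut [DecidableEq ι] (A : Finset (Option ι)) : ι → ZMod 2 :=
  foldWord (charWord A)

/-- The action on the folded cube of a permutation of its `card ι + 1` coordinates. -/
def permute (π : Equiv.Perm (Option ι)) (c : ι → ZMod 2) : ι → ZMod 2 :=
  foldWord (liftWord c ∘ π)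

theorem foldWord_liftWord (c : ι → ZMod 2) : foldWord (liftWord c) = c :=
  funext fun _ => add_zero _

theorem foldWord_add_one (w : Option ι → ZMod 2) : foldWord (w + 1) = foldWord w := by
  ext k
  have hadd (a b : ZMod 2) : a + 1 + (b + 1) = a + b := by decide +revert
  exact hadd _ _

theorem liftWord_foldWord (w : Option ι → ZMod 2) :
    liftWord (foldWord w) = w ∨ liftWord (foldWord w) = w + 1 := by
  have hadd (a : ZMod 2) : a = 0 ∨ a = 1 := by decide +revert
  rcases hadd (w none) with h | h
  · refine .inl (funext fun o => ?_)
    cases o <;> simp [liftWord, foldWord, h]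
  · refine .inr (funext fun o => ?_)
    cases o <;> simp [liftWord, foldWord, h, CharTwo.add_self_eq_zero]

theorem permute_permute (π ρ : Equiv.Perm (Option ι)) (c : ι → ZMod 2) :
    permute π (permute ρ c) = permute (ρ * π) c := by
  rcases liftWord_foldWord (liftWord c ∘ ρ) with h | h
  · rw [permute, permute, h, permute, Equiv.Perm.coe_mul, Function.comp_assoc]
  · rw [permute, permute, h, permute, Equiv.Perm.coe_mul, ← Function.comp_assoc]
    exact foldWord_add_one _

theorem permute_one (c : ι → ZMod 2) : permute 1 c = c :=
  foldWord_liftWord c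

section Fintype

variable [Fintype ι]

theorem hammingDist_liftWord (x y : ι → ZMod 2) :
    hammingDist (liftWord x) (liftWord y) = hammingDist x y := by
  rw [hammingDist, hammingDist, card_filter, card_filter, Fintype.sum_option]
  exact zero_add _

theorem hammingNorm_liftWord (x : ι → ZMod 2) : hammingNorm (liftWord x) = hammingNorm x := by
  have h₀ : liftWord (0 : ι → ZMod 2) = 0 := by
    ext o
    cases o <;> rfl
  rw [← hammingDist_zero_right, ← h₀, hammingDist_liftWord, hammingDist_zero_right]

theorem foldedDist_foldWord (w w' : Option ι → ZMod 2) :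
    foldedDist (foldWord w) (foldWord w') =
      min (hammingDist w w') (Fintype.card ι + 1 - hammingDist w w') := by
  have hcompl (w w' : Option ι → ZMod 2) :
      hammingDist w (w' + 1) + hammingDist w w' = Fintype.card ι + 1 :=
    (hammingDist_add_one_right w w').trans Fintype.card_option
  have h₁ := hcompl w w'
  have h₂ := hcompl w' w
  have h₃ := hcompl (w + 1) w'
  rw [hammingDist_comm w' (w + 1), hammingDist_comm w' w] at h₂
  rw [foldedDist, ← hammingDist_liftWord]
  rcases liftWord_foldWord w with h | h <;> rcases liftWord_foldWord w' with h' | h' <;>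
    rw [h, h'] <;> omega

theorem foldedDist_permute (π : Equiv.Perm (Option ι)) (x y : ι → ZMod 2) :
    foldedDist (permute π x) (permute π y) = foldedDist x y := by
  rw [permute, permute, foldedDist_foldWord, hammingDist_comp_equiv, hammingDist_liftWord,
    foldedDist]

theorem foldedDist_foldWord_zero (w : Option ι → ZMod 2) :
    foldedDist (foldWord w) 0 = min (hammingNorm w) (Fintype.card ι + 1 - hammingNorm w) := by
  rw [← hammingDist_zero_right, ← foldedDist_foldWord]
  congr

variable [DecidableEq ι]

theorem exists_cut_eq (q : ι → ZMod 2) :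
    ∃ A : Finset (Option ι), #A = foldedDist q 0 ∧ cut A = q := by
  obtain ⟨w, hw, hq⟩ : ∃ w, hammingNorm w = foldedDist q 0 ∧ foldWord w = q := by
    have hcompl := hammingDist_add_one_right 0 (liftWord q)
    simp only [hammingDist_zero_left, Fintype.card_option] at hcompl
    have hdist := foldedDist_foldWord_zero (liftWord q)
    rw [foldWord_liftWord] at hdist
    rcases min_choice (hammingNorm (liftWord q))
      (Fintype.card ι + 1 - hammingNorm (liftWord q)) with h | h
    · exact ⟨liftWord q, by omega, foldWord_liftWord q⟩
    · exact ⟨liftWord q + 1, by omega, by rw [foldWord_add_one, foldWord_liftWord]⟩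
  exact ⟨({o | w o ≠ 0} : Finset _), hw, by rw [cut, charWord_filter_ne_zero, hq]⟩

theorem foldedDist_cut_zero (A : Finset (Option ι)) :
    foldedDist (cut A) 0 = min #A (Fintype.card ι + 1 - #A) := by
  rw [cut, foldedDist_foldWord_zero, hammingNorm_charWord]

theorem foldedDist_foldWord_cut_pair_eq_iff (hN : 4 ∣ Fintype.card ι + 1) {w : Option ι → ZMod 2}
    (hw : Even (hammingNorm w)) {u v : Option ι} (huv : u ≠ v) :
    foldedDist (foldWord w) (cut {u, v}) = foldedDist (foldWord w) 0 ↔ w u ≠ w v := by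
  have hw_le := hammingNorm_le_card_fintype (x := w)
  have hdist_le := hammingDist_le_card_fintype (x := w) (y := charWord {u, v})
  rw [Fintype.card_option] at hw_le hdist_le
  have hdist := hammingDist_charWord_add_two_mul w {u, v}
  rw [card_pair huv, card_filter, sum_pair huv] at hdist
  rw [cut, foldedDist_foldWord, foldedDist_foldWord_zero]
  obtain ⟨m, hm⟩ := hw
  -- If `w u = w v`, the weight changes by `±2`; were the folded weights equal, the two weights
  -- would sum to `card ι + 1`, and their mean `(card ι + 1) / 2` would be odd.
  have hne (a b : ZMod 2) : a ≠ b ↔ ¬ (a ≠ 0 ↔ b ≠ 0) := by decide +revert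
  rw [hne]
  by_cases hu : w u = 0 <;> by_cases hv : w v = 0 <;>
    simp only [hu, hv, ne_eq, not_true_eq_false, not_false_eq_true, if_true, if_false, iff_true,
      iff_false] at hdist ⊢ <;> omega

theorem foldedDist_cut_cut_eq_iff (hN : 4 ∣ Fintype.card ι + 1) {A B : Finset (Option ι)}
    (hA : Even #A) (hB : #B = 2) :
    foldedDist (cut A) (cut B) = foldedDist (cut A) 0 ↔ #(A ∩ B) = 1 := by
  obtain ⟨u, v, huv, rfl⟩ := card_eq_two.1 hB
  rw [← hammingNorm_charWord] at hA
  have hfilter : A ∩ {u, v} = ({u, v} : Finset (Option ι)).filter (· ∈ A) := by grind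
  rw [cut, foldedDist_foldWord_cut_pair_eq_iff hN hA huv, hfilter, card_filter, sum_pair huv]
  by_cases hu : u ∈ A <;> by_cases hv : v ∈ A <;> simp [charWord, hu, hv]

theorem even_hammingNorm_cut (hN : Even (Fintype.card ι + 1)) {A : Finset (Option ι)}
    (hA : #A = 2) : Even (hammingNorm (cut A)) := by
  rw [← hammingDist_zero_right, ← even_foldedDist hN, foldedDist_cut_zero, hA]
  have hle := card_le_univ A
  rw [Fintype.card_option, hA] at hle
  obtain ⟨m, hm⟩ := hN
  rw [Nat.even_iff]
  omega

end Fintype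

end Representatives

section EvenIsometry

variable {ι : Type*} [Fintype ι] {φ : (ι → ZMod 2) → ι → ZMod 2}

theorem IsEvenFoldedIsometry.foldedDist_eq (hφ : IsEvenFoldedIsometry φ) {x y : ι → ZMod 2}
    (hx : Even (hammingNorm x)) (hy : Even (hammingNorm y)) :
    foldedDist (φ x) (φ y) = foldedDist x y := by
  rw [even_hammingNorm_iff] at hx hy
  exact hφ x y (even_hammingDist_iff.2 (hx.trans hy.symm))

theorem IsEvenFoldedIsometry.foldedDist_zero (hφ : IsEvenFoldedIsometry φ) (hφ₀ : φ 0 = 0)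
    {x : ι → ZMod 2} (hx : Even (hammingNorm x)) : foldedDist (φ x) 0 = foldedDist x 0 := by
  rw [← hφ x 0 (by rwa [hammingDist_zero_right]), hφ₀]

theorem IsEvenFoldedIsometry.exists_perm_forall_cut [DecidableEq ι] (hcard : 4 ≤ Fintype.card ι)
    (hN : 4 ∣ Fintype.card ι + 1) (hφ : IsEvenFoldedIsometry φ) (hφ₀ : φ 0 = 0) :
    ∃ π : Equiv.Perm (Option ι), ∀ a, φ (cut {none, some a}) = cut {π none, π (some a)} := by
  have hN' : Even (Fintype.card ι + 1) := even_iff_two_dvd.2 (dvd_trans (by decide) hN)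
  have hpair (a : ι) : #({none, some a} : Finset (Option ι)) = 2 := card_pair (by simp)
  choose A hA hφA using fun a => exists_cut_eq (φ (cut {none, some a}))
  replace hA (a : ι) : #(A a) = 2 := by
    rw [hA, hφ.foldedDist_zero hφ₀ (even_hammingNorm_cut hN' (hpair a)), foldedDist_cut_zero,
      hpair]
    omega
  suffices hinter : ∀ a b, a ≠ b → #(A a ∩ A b) = 1 by
    obtain ⟨π, hπ⟩ := exists_perm_of_forall_card_inter_eq_one hcard hA hinter
    exact ⟨π, fun a => by rw [← hφA, hπ]⟩
  intro a b hab
  have hsingleton : ({none, some a} : Finset (Option ι)) ∩ {none, some b} = {none} := by grind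
  have heven (a : ι) := even_hammingNorm_cut hN' (hpair a)
  rw [← foldedDist_cut_cut_eq_iff hN (by rw [hA]; exact even_two) (hA b), hφA, hφA,
    hφ.foldedDist_eq (heven a) (heven b), hφ.foldedDist_zero hφ₀ (heven a),
    foldedDist_cut_cut_eq_iff hN (by rw [hpair]; exact even_two) (hpair b), hsingleton,
    card_singleton]

theorem IsEvenFoldedIsometry.exists_eq_permute (hcard : 4 ≤ Fintype.card ι)
    (hN : 4 ∣ Fintype.card ι + 1) (hφ : IsEvenFoldedIsometry φ) (hφ₀ : φ 0 = 0) :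
    ∃ π : Equiv.Perm (Option ι), ∀ c, Even (hammingNorm c) → φ c = permute π c := by
  classical
  have hN' : Even (Fintype.card ι + 1) := even_iff_two_dvd.2 (dvd_trans (by decide) hN)
  obtain ⟨π, hπ⟩ := hφ.exists_perm_forall_cut hcard hN hφ₀
  refine ⟨π⁻¹, fun c hc => ?_⟩
  suffices h : permute π (φ c) = c by
    rw [← h, permute_permute, mul_inv_cancel, permute_one, h]
  have hφc : Even (hammingNorm (φ c)) := by
    rwa [← hammingDist_zero_right, ← even_foldedDist hN', hφ.foldedDist_zero hφ₀ hc,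
      even_foldedDist hN', hammingDist_zero_right]
  have hiff {w : ι → ZMod 2} (hw : Even (hammingNorm w)) {u v : Option ι} (huv : u ≠ v) :
      foldedDist w (cut {u, v}) = foldedDist w 0 ↔ liftWord w u ≠ liftWord w v := by
    rw [← hammingNorm_liftWord] at hw
    rw [← foldedDist_foldWord_cut_pair_eq_iff hN hw huv, foldWord_liftWord]
  ext a
  have hne : liftWord (φ c) (π none) ≠ liftWord (φ c) (π (some a)) ↔
      liftWord c none ≠ liftWord c (some a) := by
    have hcut := even_hammingNorm_cut hN' (card_pair (Option.some_ne_none a).symm)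
    rw [← hiff hφc (by simp), ← hπ, ← hiff hc (by simp), hφ.foldedDist_eq hc hcut,
      hφ.foldedDist_zero hφ₀ hc]
  have hadd (a b c : ZMod 2) (h : a ≠ b ↔ 0 ≠ c) : b + a = c := by decide +revert
  exact hadd _ _ _ hne

end EvenIsometry

section SigmaMap

theorem permute_optionCongr {ι : Type*} (ρ : Equiv.Perm ι) (c : ι → ZMod 2) :
    permute ρ.optionCongr c = c ∘ ρ :=
  funext fun _ => add_zero _

variable {n : ℕ} {i j : Fin n} {σ : {k : Fin n // k ≠ i} ≃ {k : Fin n // k ≠ j}}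

theorem sigmaMap_eq_permute {ρ : Equiv.Perm (Fin n)} (hj : ρ j = i)
    (hσ : ∀ k (hk : k ≠ j), ρ k = σ.symm ⟨k, hk⟩) (c : Fin n → ZMod 2) :
    sigmaMap n i j σ c = permute (Equiv.swap none (some i) * ρ.optionCongr) c := by
  ext k
  by_cases hk : k = j
  · simp [sigmaMap, permute, foldWord, liftWord, hk, hj]
  · have hne : (σ.symm ⟨k, hk⟩).1 ≠ i := (σ.symm ⟨k, hk⟩).2
    have hswap : Equiv.swap none (some i) (some (σ.symm ⟨k, hk⟩).1) = some (σ.symm ⟨k, hk⟩).1 :=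
      Equiv.swap_apply_of_ne_of_ne (Option.some_ne_none _) (mt Option.some_inj.1 hne)
    simp [sigmaMap, permute, foldWord, liftWord, hk, hswap, hσ k hk]

theorem exists_sigmaMap_eq_permute (σ : {k : Fin n // k ≠ i} ≃ {k : Fin n // k ≠ j}) :
    ∃ π : Equiv.Perm (Option (Fin n)), ∀ c, sigmaMap n i j σ c = permute π c := by
  let ρ : Equiv.Perm (Fin n) := σ.symm.extendSubtype
  refine ⟨_, sigmaMap_eq_permute (ρ := ρ) ?_ fun k hk => ?_⟩
  · exact not_not.1 (σ.symm.extendSubtype_not_mem j (not_not.2 rfl))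
  · exact σ.symm.extendSubtype_apply_of_mem k hk

theorem exists_comp_or_sigmaMap (π : Equiv.Perm (Option (Fin n))) :
    (∃ ρ : Equiv.Perm (Fin n), ∀ c, permute π c = c ∘ ρ) ∨
      ∃ (i j : Fin n) (σ : {k : Fin n // k ≠ i} ≃ {k : Fin n // k ≠ j}),
        ∀ c, permute π c = sigmaMap n i j σ c := by
  obtain ⟨⟨o, ρ⟩, rfl⟩ := Equiv.Perm.decomposeOption.symm.surjective π
  rw [Equiv.Perm.decomposeOption_symm_apply]
  cases o with
  | none =>
    refine .inl ⟨ρ, fun c => ?_⟩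
    rw [Equiv.swap_self, ← permute_optionCongr]
    rfl
  | some i =>
    have hne (k : Fin n) : k ≠ i ↔ ρ.symm k ≠ ρ.symm i := ρ.symm.injective.ne_iff.symm
    refine .inr ⟨i, ρ.symm i, ρ.symm.subtypeEquiv hne, fun c => (sigmaMap_eq_permute ?_ ?_ c).symm⟩
    · exact ρ.apply_symm_apply i
    · exact fun _ _ => rfl

theorem sigmaMap_zero : sigmaMap n i j σ 0 = 0 := by
  ext k
  simp [sigmaMap]

theorem sigmaMap_add_one (c : Fin n → ZMod 2) :
    sigmaMap n i j σ (c + 1) + (fun k => if k = j then 0 else 1) = sigmaMap n i j σ c + 1 := by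
  have hadd (a b : ZMod 2) : a + 1 + (b + 1) + 1 = a + b + 1 := by decide +revert
  ext k
  by_cases hk : k = j
  · simp [sigmaMap, hk]
  · simp [sigmaMap, hk, hadd]

theorem forall_odd_eq_iff_forall_add_one (hn : Odd n) {ψ : (Fin n → ZMod 2) → Fin n → ZMod 2}
    (hψ : ∀ c, Even (hammingNorm c) → ψ c = sigmaMap n i j σ c) :
    (∀ c, Odd (hammingNorm c) →
      ψ c = sigmaMap n i j σ c + (fun k => if k = j then (0 : ZMod 2) else 1)) ↔
    ∀ c, ψ (c + 1) = ψ c + 1 := by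
  rw [← Fintype.card_fin n] at hn
  constructor
  · intro hodd
    have hcompl (c : Fin n → ZMod 2) (hc : Even (hammingNorm c)) : ψ (c + 1) = ψ c + 1 := by
      rw [hodd _ ((odd_hammingNorm_add_one hn).2 hc), sigmaMap_add_one, hψ c hc]
    intro c
    rcases Nat.even_or_odd (hammingNorm c) with hc | hc
    · exact hcompl c hc
    · have := hcompl (c + 1) ((even_hammingNorm_add_one hn).2 hc)
      rw [add_one_add_one] at this
      rw [this, add_one_add_one]
  · intro hcompl c hc
    rw [← add_one_add_one c, hcompl, hψ _ ((even_hammingNorm_add_one hn).2 hc), sigmaMap_add_one]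

end SigmaMap

section Complement

variable {ι : Type*} [Fintype ι] {φ : (ι → ZMod 2) → ι → ZMod 2}

theorem eq_of_forall_even (hn : Odd (Fintype.card ι)) {ψ : (ι → ZMod 2) → ι → ZMod 2}
    (hφ : ∀ c, φ (c + 1) = φ c + 1) (hψ : ∀ c, ψ (c + 1) = ψ c + 1)
    (heven : ∀ c, Even (hammingNorm c) → φ c = ψ c) : φ = ψ := by
  ext1 c
  rcases Nat.even_or_odd (hammingNorm c) with hc | hc
  · exact heven c hc
  · rw [← add_one_add_one c, hφ, hψ, heven _ ((even_hammingNorm_add_one hn).2 hc)]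

theorem isEvenFoldedIsometry_of_forall_even (hn : Odd (Fintype.card ι))
    (hcompl : ∀ c, φ (c + 1) = φ c + 1)
    (heven : ∀ x y, Even (hammingNorm x) → Even (hammingNorm y) →
      foldedDist (φ x) (φ y) = foldedDist x y) : IsEvenFoldedIsometry φ := by
  intro x y hxy
  have hparity : Even (hammingNorm x) ↔ Even (hammingNorm y) := by
    rw [even_hammingNorm_iff, even_hammingNorm_iff, even_hammingDist_iff.1 hxy]
  rcases Nat.even_or_odd (hammingNorm x) with hx | hx
  · exact heven x y hx (hparity.1 hx)
  · have hy : Odd (hammingNorm y) := by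
      rw [← Nat.not_even_iff_odd] at hx ⊢
      exact mt hparity.2 hx
    have h := heven _ _ ((even_hammingNorm_add_one hn).2 hx) ((even_hammingNorm_add_one hn).2 hy)
    rwa [hcompl, hcompl, foldedDist_add_right, foldedDist_add_right] at h

theorem IsEvenFoldedIsometry.injective (hN : Even (Fintype.card ι + 1))
    (hφ : IsEvenFoldedIsometry φ) (hcompl : ∀ c, φ (c + 1) = φ c + 1) :
    Function.Injective φ := by
  intro x y hxy
  by_cases heven : Even (hammingDist x y)
  · refine eq_of_foldedDist_eq_zero ?_
    rw [← hφ x y heven, hxy]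
    simp [foldedDist]
  · have hy := hammingDist_add_one_right x y
    have hφy := hammingDist_add_one_right (φ y) (φ y)
    have heven' : Even (hammingDist x (y + 1)) := by grind
    have := hφ x (y + 1) heven'
    rw [hcompl, hxy] at this
    rw [← even_foldedDist hN, ← this, even_foldedDist hN] at heven'
    rw [hammingDist_self] at hφy
    grind

theorem IsEvenFoldedIsometry.hammingDist_eq {h : ℕ} (hN : Fintype.card ι + 1 = 2 * h)
    (hh : Even h) (hφ : IsEvenFoldedIsometry φ) {x y : ι → ZMod 2} (hxy : hammingDist x y = h) :
    hammingDist (φ x) (φ y) = h := by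
  have hdist := hφ x y (hxy ▸ hh)
  rw [foldedDist, foldedDist, hxy] at hdist
  omega

theorem IsEvenFoldedIsometry.hammingDist_eq_of_mem {h : ℕ} (hN : Fintype.card ι + 1 = 2 * h)
    (hh : Even h) (hφ : IsEvenFoldedIsometry φ) (hcompl : ∀ c, φ (c + 1) = φ c + 1)
    {x y : ι → ZMod 2} (hxy : hammingDist x y = h - 1 ∨ hammingDist x y = h ∨
      hammingDist x y = Fintype.card ι) :
    hammingDist (φ x) (φ y) = hammingDist x y := by
  rcases hxy with hxy | hxy | hxy
  · have hy := hammingDist_add_one_right x y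
    have hφy := hammingDist_add_one_right (φ x) (φ y)
    have := hφ.hammingDist_eq hN hh (x := x) (y := y + 1) (by omega)
    rw [hcompl] at this
    omega
  · rw [hφ.hammingDist_eq hN hh hxy, hxy]
  · rw [eq_add_one_of_hammingDist_eq_card hxy, hcompl, hammingDist_add_one_self,
      hammingDist_add_one_self]

end Complement

section Classification

variable {n : ℕ}

theorem four_le_of_not_even_isometry (hn : n % 4 = 3) {φ : (Fin n → ZMod 2) → Fin n → ZMod 2}
    (hdist : ∀ x y, hammingDist x y = (n + 1) / 2 → hammingDist (φ x) (φ y) = (n + 1) / 2)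
    (hnot : ¬ ∀ x y, Even (hammingDist x y) → hammingDist (φ x) (φ y) = hammingDist x y) :
    4 ≤ n := by
  by_contra hlt
  obtain rfl : n = 3 := by omega
  refine hnot fun x y hxy => ?_
  have hle : hammingDist x y ≤ 3 := hammingDist_le_card_fintype
  obtain h | h : hammingDist x y = 0 ∨ hammingDist x y = 2 := by grind
  · rw [hammingDist_eq_zero] at h
    simp [h]
  · rw [h, hdist x y h]

theorem exists_eq_sigmaMap (hn : n % 4 = 3) {φ : (Fin n → ZMod 2) → Fin n → ZMod 2}
    (hφ : Function.Injective φ) (hφ₀ : φ 0 = 0)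
    (hdist : ∀ x y, hammingDist x y = (n + 1) / 2 → hammingDist (φ x) (φ y) = (n + 1) / 2)
    (hcompl : ∀ c, φ (c + 1) = φ c + 1)
    (hnot : ¬ ∀ x y, Even (hammingDist x y) → hammingDist (φ x) (φ y) = hammingDist x y) :
    ∃ (i j : Fin n) (σ : {k : Fin n // k ≠ i} ≃ {k : Fin n // k ≠ j}),
      ∀ c, Even (hammingNorm c) → φ c = sigmaMap n i j σ c := by
  have hcard := Fintype.card_fin n
  have hn₄ := four_le_of_not_even_isometry hn hdist hnot
  have hfolded : IsEvenFoldedIsometry φ := isEvenFoldedIsometry_of_injective (by omega) hφ hdist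
  obtain ⟨π, hπ⟩ := hfolded.exists_eq_permute (by omega) (by omega) hφ₀
  rcases exists_comp_or_sigmaMap π with ⟨ρ, hρ⟩ | ⟨i, j, σ, hσ⟩
  · have hφρ : φ = fun c => c ∘ ρ :=
      eq_of_forall_even (by rw [hcard, Nat.odd_iff]; omega) hcompl (fun _ => rfl)
        fun c hc => (hπ c hc).trans (hρ c)
    refine absurd (fun x y _ => ?_) hnot
    rw [hφρ, hammingDist_comp_equiv]
  · exact ⟨i, j, σ, fun c hc => (hπ c hc).trans (hσ c)⟩

theorem isEvenFoldedIsometry_of_eq_sigmaMap (hn : Odd n) {i j : Fin n}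
    {σ : {k : Fin n // k ≠ i} ≃ {k : Fin n // k ≠ j}} {ψ : (Fin n → ZMod 2) → Fin n → ZMod 2}
    (hψ : ∀ c, Even (hammingNorm c) → ψ c = sigmaMap n i j σ c)
    (hcompl : ∀ c, ψ (c + 1) = ψ c + 1) : IsEvenFoldedIsometry ψ := by
  obtain ⟨π, hπ⟩ := exists_sigmaMap_eq_permute σ
  refine isEvenFoldedIsometry_of_forall_even (by rwa [Fintype.card_fin]) hcompl fun x y hx hy => ?_
  rw [hψ x hx, hψ y hy, hπ, hπ, foldedDist_permute]

end Classification

end BooleanCube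

/-- For `n ≡ 3 (mod 4)`: every `{(n-1)/2, (n+1)/2, n}`-isometry of `C_n` fixing `0̄` that
is not an even isometry coincides with a `σ_{i,j}`-mapping `τ` on the even-weight words
and with `T_{1̄^j} ∘ τ` on the odd-weight words, where `1̄^j` has `1` everywhere except a
`0` in position `j`; conversely, every map of that form is such an isometry fixing `0̄`. -/
theorem tripleIsometry_three_mod_four (n : ℕ) (hn : n % 4 = 3) :
    (∀ φ : (Fin n → ZMod 2) → Fin n → ZMod 2,
      Function.Bijective φ → φ 0 = 0 →
      (∀ x y, (hammingDist x y = (n - 1) / 2 ∨ hammingDist x y = (n + 1) / 2 ∨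
          hammingDist x y = n) →
        hammingDist (φ x) (φ y) = hammingDist x y) →
      ¬(∀ x y, Even (hammingDist x y) →
        hammingDist (φ x) (φ y) = hammingDist x y) →
      ∃ (i j : Fin n) (σ : {k : Fin n // k ≠ i} ≃ {k : Fin n // k ≠ j}),
        (∀ c, Even (hammingNorm c) → φ c = sigmaMap n i j σ c) ∧
        (∀ c, Odd (hammingNorm c) →
          φ c = sigmaMap n i j σ c +
            (fun k => if k = j then (0 : ZMod 2) else 1))) ∧
    (∀ (i j : Fin n) (σ : {k : Fin n // k ≠ i} ≃ {k : Fin n // k ≠ j})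
        (ψ : (Fin n → ZMod 2) → Fin n → ZMod 2),
      (∀ c, Even (hammingNorm c) → ψ c = sigmaMap n i j σ c) →
      (∀ c, Odd (hammingNorm c) →
        ψ c = sigmaMap n i j σ c +
          (fun k => if k = j then (0 : ZMod 2) else 1)) →
      Function.Bijective ψ ∧ ψ 0 = 0 ∧
      ∀ x y, (hammingDist x y = (n - 1) / 2 ∨ hammingDist x y = (n + 1) / 2 ∨
          hammingDist x y = n) →
        hammingDist (ψ x) (ψ y) = hammingDist x y) := by
  obtain ⟨h, hN, hh⟩ : ∃ h, Fintype.card (Fin n) + 1 = 2 * h ∧ Even h :=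
    ⟨(n + 1) / 2, by rw [Fintype.card_fin]; omega, by rw [Nat.even_iff]; omega⟩
  have hn_odd : Odd n := by rw [Nat.odd_iff]; omega
  constructor
  · intro φ hφ hφ₀ hdist hnot
    have hcompl (c : Fin n → ZMod 2) : φ (c + 1) = φ c + 1 := by
      have hc : hammingDist (c + 1) c = n := by
        rw [BooleanCube.hammingDist_add_one_self, Fintype.card_fin]
      refine BooleanCube.eq_add_one_of_hammingDist_eq_card ?_
      rw [hdist _ _ (.inr (.inr hc)), hc, Fintype.card_fin]
    obtain ⟨i, j, σ, heven⟩ := BooleanCube.exists_eq_sigmaMap hn hφ.injective hφ₀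
      (fun x y h => (hdist x y (.inr (.inl h))).trans h) hcompl hnot
    exact ⟨i, j, σ, heven, (BooleanCube.forall_odd_eq_iff_forall_add_one hn_odd heven).2 hcompl⟩
  · intro i j σ ψ heven hodd
    have hcompl := (BooleanCube.forall_odd_eq_iff_forall_add_one hn_odd heven).1 hodd
    have hψ := BooleanCube.isEvenFoldedIsometry_of_eq_sigmaMap hn_odd heven hcompl
    refine ⟨Finite.injective_iff_bijective.1 (hψ.injective (hN ▸ even_two_mul h) hcompl), ?_,
      fun x y hxy => hψ.hammingDist_eq_of_mem hN hh hcompl ?_⟩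
    · rw [heven 0 (by simp), BooleanCube.sigmaMap_zero]
    · rw [Fintype.card_fin] at hN ⊢
      rwa [show h = (n + 1) / 2 by omega, show (n + 1) / 2 - 1 = (n - 1) / 2 by omega]
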